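/- arXiv:1903.02563 — 2 statements merged into one kernel-verified Lean document; each statement's English description precedes it below -/
import Mathlib

section
/- Let v, w : Fin n → ℂⁿ be two orthonormal bases such that ⟨w_l, v_j⟩ ≠ 0 for all j, l, and let ρ be any n×n complex matrix. Define q(j,k,l) := ⟨w_l, v_j⟩·⟨v_j, ρ·v_k⟩·⟨v_k, w_l⟩. Then ρ = Σ_{j,k,l} q(j,k,l) · (v_j·w_lᴴ) / ⟨w_l, v_j⟩, i.e., the matrix ρ is fully reconstructed from its doubly extended Kirkwood–Dirac quasiprobability distribution. -/
open Matrix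

theorem sum_vecMulVec_eq_one_of_biorthogonal {ι m R : Type*} [Fintype ι] [DecidableEq ι]
    [Fintype m] [DecidableEq m] [Semiring R] [IsStablyFiniteRing R]
    (hcard : Fintype.card ι = Fintype.card m) {v v' : ι → m → R}
    (hv : ∀ j k, v' j ⬝ᵥ v k = if j = k then 1 else 0) :
    ∑ j, vecMulVec (v j) (v' j) = 1 := by
  have gram_eq_one : of v' * (of v)ᵀ = 1 := by
    ext j k
    exact (hv j k).trans one_apply.symm
  calc
    ∑ j, vecMulVec (v j) (v' j) = (of v)ᵀ * of v' := by
      ext r s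
      simp [Matrix.sum_apply, mul_apply, vecMulVec_apply]
    _ = 1 := (mul_eq_one_comm_of_card_eq _ _ _ hcard).1 gram_eq_one

section CommSemiring

variable {m n R : Type*} [Fintype m] [Fintype n] [CommSemiring R]

theorem vecMulVec_mul_mul_vecMulVec_mul_vecMulVec
    {l o p : Type*} [Fintype p] (M : Matrix m n R) (a : l → R) (a' : m → R) (b : n → R)
    (b' c : p → R) (c' : o → R) :
    vecMulVec a a' * (M * (vecMulVec b b' * vecMulVec c c'))
      = ((a' ⬝ᵥ M *ᵥ b) * (b' ⬝ᵥ c)) • vecMulVec a c' := by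
  rw [vecMulVec_mul_vecMulVec b, mul_vecMulVec, vecMulVec_mul_vecMulVec, vecMulVec_smul,
    vecMulVec_smul, smul_smul]

theorem eq_sum_smul_vecMulVec_of_sum_vecMulVec_eq_one [DecidableEq m] [DecidableEq n]
    {ι κ τ : Type*} [Fintype ι] [Fintype κ] [Fintype τ]
    {a a' : ι → m → R} {b b' : κ → n → R} {c c' : τ → n → R}
    (ha : ∑ j, vecMulVec (a j) (a' j) = 1) (hb : ∑ k, vecMulVec (b k) (b' k) = 1)
    (hc : ∑ l, vecMulVec (c l) (c' l) = 1) (M : Matrix m n R) :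
    M = ∑ j, ∑ k, ∑ l, ((a' j ⬝ᵥ M *ᵥ b k) * (b' k ⬝ᵥ c l)) • vecMulVec (a j) (c' l) :=
  calc
    M = (∑ j, vecMulVec (a j) (a' j)) *
        (M * ((∑ k, vecMulVec (b k) (b' k)) * ∑ l, vecMulVec (c l) (c' l))) := by
      rw [ha, hb, hc, Matrix.one_mul, Matrix.mul_one, Matrix.mul_one]
    _ = ∑ j, ∑ k, ∑ l, vecMulVec (a j) (a' j) *
        (M * (vecMulVec (b k) (b' k) * vecMulVec (c l) (c' l))) := by
      simp_rw [Matrix.sum_mul, Matrix.mul_sum]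
    _ = ∑ j, ∑ k, ∑ l, ((a' j ⬝ᵥ M *ᵥ b k) * (b' k ⬝ᵥ c l)) • vecMulVec (a j) (c' l) := by
      simp only [vecMulVec_mul_mul_vecMulVec_mul_vecMulVec]

end CommSemiring

/-- Pairs of dual frames `(v, v')` and `(w, w')` take the place of the orthonormal bases and their
conjugates `(v, star v)` and `(w, star w)`. -/
theorem kd_reconstruction_general {ι κ m K : Type*} [Fintype ι] [Fintype κ] [Fintype m]
    [DecidableEq m] [Semifield K] {v v' : ι → m → K} {w w' : κ → m → K}
    (hv : ∑ j, vecMulVec (v j) (v' j) = 1) (hw : ∑ l, vecMulVec (w l) (w' l) = 1)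
    (hnz : ∀ j l, w' l ⬝ᵥ v j ≠ 0) (ρ : Matrix m m K) (q : ι → ι → κ → K)
    (hq : ∀ j k l, q j k l = (w' l ⬝ᵥ v j) * (v' j ⬝ᵥ ρ *ᵥ v k) * (v' k ⬝ᵥ w l)) :
    ρ = ∑ j, ∑ k, ∑ l, (q j k l / (w' l ⬝ᵥ v j)) • vecMulVec (v j) (w' l) := by
  have quotient_eq (j k l) :
      q j k l / (w' l ⬝ᵥ v j) = (v' j ⬝ᵥ ρ *ᵥ v k) * (v' k ⬝ᵥ w l) := by
    rw [hq, mul_assoc, mul_div_cancel_left₀ _ (hnz j l)]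
  simp only [quotient_eq]
  exact eq_sum_smul_vecMulVec_of_sum_vecMulVec_eq_one hv hv hw ρ

/-- A matrix `ρ` is fully reconstructed from its doubly extended Kirkwood–Dirac
quasiprobability distribution. -/
theorem kd_reconstruction
    {n : ℕ}
    (v w : Fin n → (Fin n → ℂ))
    (hv_on : ∀ j k, star (v j) ⬝ᵥ v k = if j = k then 1 else 0)
    (hw_on : ∀ j k, star (w j) ⬝ᵥ w k = if j = k then 1 else 0)
    (hnz : ∀ j l, star (w l) ⬝ᵥ v j ≠ 0)
    (ρ : Matrix (Fin n) (Fin n) ℂ)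
    (q : Fin n → Fin n → Fin n → ℂ)
    (hq : ∀ j k l, q j k l
        = (star (w l) ⬝ᵥ v j) * (star (v j) ⬝ᵥ ρ.mulVec (v k)) * (star (v k) ⬝ᵥ w l)) :
    ρ = ∑ j : Fin n, ∑ k : Fin n, ∑ l : Fin n,
        (q j k l / (star (w l) ⬝ᵥ v j)) • vecMulVec (v j) (star (w l)) :=
  kd_reconstruction_general (sum_vecMulVec_eq_one_of_biorthogonal rfl hv_on)
    (sum_vecMulVec_eq_one_of_biorthogonal rfl hw_on) hnz ρ q hq
end

section
/- Let A be an n×n complex Hermitian matrix and F an n×n orthogonal projection with A·F = F·A. Then there exist an orthonormal basis v : Fin n → ℂⁿ and reals α : Fin n → ℝ such that A·v_j = α_j·v_j for every j and each v_j satisfies F·v_j = v_j or F·v_j = 0; moreover, for every positive semidefinite n×n matrix ρ, taking both bases of the doubly extended Kirkwood–Dirac distribution equal to v, every quasiprobability q(j,k,l) := ⟨v_l, v_j⟩·⟨v_j, ρ·v_k⟩·⟨v_k, v_l⟩ is a nonnegative real number (it equals ⟨v_j, ρ·v_j⟩ when j = k = l and 0 otherwise). (If the generator commutes with the postselection projector,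 the doubly extended Kirkwood–Dirac quasiprobability distribution can be expressed as real and nonnegative.) -/
open Matrix
open scoped ComplexOrder

/-!
Commuting self-adjoint operators split the space into mutually orthogonal joint eigenspaces, so
there is an orthonormal basis `v` of joint eigenvectors of `A` and `F`; idempotence forces the
eigenvalues of `F` into `{0, 1}`. When both bases of the distribution are `v`, the overlaps
`⟨v_l, v_j⟩` and `⟨v_k, v_l⟩` are Kronecker deltas, and only the diagonal entries
`⟨v_j, ρ v_j⟩ ≥ 0` survive.
-/

section JointEigenbasis

open Module Module.End
open scoped Function

variable {𝕜 E ι κ : Type*} [RCLike 𝕜]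

section InnerProductSpace

variable [NormedAddCommGroup E] [InnerProductSpace 𝕜 E]

theorem ofReal_re_eq_of_isSymmetric_of_apply_eq_smul {T : E →ₗ[𝕜] E} (hT : T.IsSymmetric)
    {μ : 𝕜} {x : E} (hx : x ≠ 0) (hTx : T x = μ • x) : (RCLike.re μ : 𝕜) = μ :=
  RCLike.conj_eq_iff_re.mp <| hT.conj_eigenvalue_eq_self <|
    hasEigenvalue_of_hasEigenvector ⟨mem_eigenspace_iff.mpr hTx, hx⟩

variable [FiniteDimensional 𝕜 E]

theorem exists_orthonormalBasis_mem_of_isInternal [DecidableEq ι] {V : ι → Submodule 𝕜 E}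
    (hV : DirectSum.IsInternal V)
    (hV_orth : OrthogonalFamily 𝕜 (fun i => V i) fun i => (V i).subtypeₗᵢ) :
    ∃ b : OrthonormalBasis (Fin (finrank 𝕜 E)) 𝕜 E, ∀ j, ∃ i, b j ∈ V i := by
  -- `subordinateOrthonormalBasis` needs a finite index type, so discard the trivial summands.
  have : Fintype {i // V i ≠ ⊥} := hV.submodule_iSupIndep.fintypeNeBotOfFiniteDimensional
  have hV_ne_bot : DirectSum.IsInternal fun i : {i // V i ≠ ⊥} => V i :=
    DirectSum.isInternal_ne_bot_iff.mpr hV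
  have hV_ne_bot_orth := hV_orth.comp (Subtype.val_injective (p := fun i => V i ≠ ⊥))
  exact ⟨hV_ne_bot.subordinateOrthonormalBasis rfl hV_ne_bot_orth, fun j =>
    ⟨_, hV_ne_bot.subordinateOrthonormalBasis_subordinate rfl j hV_ne_bot_orth⟩⟩

theorem exists_orthonormalBasis_apply_eq_smul_of_pairwise_commute {T : κ → E →ₗ[𝕜] E}
    (hT : ∀ i, (T i).IsSymmetric) (hcomm : Pairwise (Commute on T)) :
    ∃ (b : OrthonormalBasis (Fin (finrank 𝕜 E)) 𝕜 E) (α : κ → Fin (finrank 𝕜 E) → ℝ),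
      ∀ i j, T i (b j) = (α i j : 𝕜) • b j := by
  classical
  obtain ⟨b, hb⟩ := exists_orthonormalBasis_mem_of_isInternal
    (LinearMap.IsSymmetric.directSum_isInternal_of_pairwise_commute hT hcomm)
    (LinearMap.IsSymmetric.orthogonalFamily_iInf_eigenspaces hT)
  choose μ hμ using hb
  have hTb (i j) : T i (b j) = μ j i • b j :=
    mem_eigenspace_iff.mp ((Submodule.mem_iInf _).mp (hμ j) i)
  refine ⟨b, fun i j => RCLike.re (μ j i), fun i j => ?_⟩
  rw [ofReal_re_eq_of_isSymmetric_of_apply_eq_smul (hT i) (b.orthonormal.ne_zero j) (hTb i j),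
    hTb]

end InnerProductSpace

variable [Fintype ι] [DecidableEq ι]

theorem exists_orthonormal_mulVec_eq_smul_of_pairwise_commute {A : κ → Matrix ι ι 𝕜}
    (hA : ∀ i, (A i).IsHermitian) (hcomm : Pairwise (Commute on A)) :
    ∃ (v : ι → ι → 𝕜) (α : κ → ι → ℝ),
      (∀ j k, star (v j) ⬝ᵥ v k = if j = k then 1 else 0) ∧
      ∀ i j, A i *ᵥ v j = (α i j : 𝕜) • v j := by
  obtain ⟨b, α, hb⟩ := exists_orthonormalBasis_apply_eq_smul_of_pairwise_commute
    (T := fun i => toEuclideanLin (A i)) (fun i => isSymmetric_toEuclideanLin_iff.mpr (hA i))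
    fun i j hij => (hcomm hij).map (toLpLinAlgEquiv 2)
  let e : ι ≃ Fin (finrank 𝕜 (EuclideanSpace 𝕜 ι)) :=
    (Fintype.equivFin ι).trans (finCongr finrank_euclideanSpace.symm)
  refine ⟨fun j => (b (e j)).ofLp, fun i j => α i (e j), fun j k => ?_, fun i j => ?_⟩
  · rw [dotProduct_comm, ← EuclideanSpace.inner_eq_star_dotProduct,
      orthonormal_iff_ite.mp b.orthonormal]
    simp only [e.apply_eq_iff_eq]
  · exact congrArg WithLp.ofLp (hb i (e j))

end JointEigenbasis

theorem mulVec_eq_self_or_eq_zero_of_isIdempotentElem {ι R : Type*} [Fintype ι] [CommRing R]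
    [IsDomain R] {F : Matrix ι ι R} (hF : IsIdempotentElem F) {c : R} {x : ι → R}
    (hFx : F *ᵥ x = c • x) : F *ᵥ x = x ∨ F *ᵥ x = 0 := by
  have h_fixed : c • F *ᵥ x = F *ᵥ x := by
    rw [← mulVec_smul, ← hFx, mulVec_mulVec, hF.eq]
  have h_smul : (c - 1) • F *ᵥ x = 0 := by
    rw [sub_smul, one_smul, h_fixed, sub_self]
  refine (smul_eq_zero.mp h_smul).imp_left fun hc => ?_
  rw [hFx, sub_eq_zero.mp hc, one_smul]

section KirkwoodDirac

variable {ι κ R : Type*} [Fintype ι]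

/-- The doubly extended Kirkwood–Dirac quasiprobability
`⟨w_l, v_j⟩ * ⟨v_j, ρ v_k⟩ * ⟨v_k, w_l⟩` of the matrix `ρ` with respect to the families of vectors
`v` and `w`, which need not be orthonormal bases here. The inner product is
`⟨x, y⟩ = star x ⬝ᵥ y`. -/
def extendedKirkwoodDirac [NonUnitalNonAssocSemiring R] [Star R] (v w : κ → ι → R)
    (ρ : Matrix ι ι R) (j k l : κ) : R :=
  (star (w l) ⬝ᵥ v j) * (star (v j) ⬝ᵥ ρ *ᵥ v k) * (star (v k) ⬝ᵥ w l)

variable [DecidableEq κ] {v : κ → ι → R}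

theorem extendedKirkwoodDirac_self [NonAssocSemiring R] [Star R]
    (hv : ∀ j k, star (v j) ⬝ᵥ v k = if j = k then 1 else 0) (ρ : Matrix ι ι R) (j k l : κ) :
    extendedKirkwoodDirac v v ρ j k l =
      if j = k ∧ k = l then star (v j) ⬝ᵥ ρ *ᵥ v j else 0 := by
  rw [extendedKirkwoodDirac, hv, hv]
  obtain rfl | hkl := eq_or_ne k l
  · obtain rfl | hjk := eq_or_ne j k
    · simp
    · simp [hjk, hjk.symm]
  · simp [hkl]

theorem extendedKirkwoodDirac_self_nonneg [Ring R] [PartialOrder R] [StarRing R]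
    (hv : ∀ j k, star (v j) ⬝ᵥ v k = if j = k then 1 else 0) {ρ : Matrix ι ι R}
    (hρ : ρ.PosSemidef) (j k l : κ) : 0 ≤ extendedKirkwoodDirac v v ρ j k l := by
  rw [extendedKirkwoodDirac_self hv]
  split_ifs
  · exact hρ.dotProduct_mulVec_nonneg (v j)
  · exact le_rfl

end KirkwoodDirac

theorem kd_nonneg_of_commute_general {𝕜 ι : Type*} [RCLike 𝕜] [Fintype ι] [DecidableEq ι]
    {A F : Matrix ι ι 𝕜} (hA : A.IsHermitian) (hF : IsStarProjection F) (hcomm : Commute A F) :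
    ∃ (v : ι → ι → 𝕜) (α : ι → ℝ),
      (∀ j k, star (v j) ⬝ᵥ v k = if j = k then 1 else 0) ∧
      (∀ j, A *ᵥ v j = (α j : 𝕜) • v j) ∧
      (∀ j, F *ᵥ v j = v j ∨ F *ᵥ v j = 0) ∧
      ∀ ρ : Matrix ι ι 𝕜, ρ.PosSemidef → ∀ j k l,
        0 ≤ extendedKirkwoodDirac v v ρ j k l ∧
        extendedKirkwoodDirac v v ρ j k l =
          if j = k ∧ k = l then star (v j) ⬝ᵥ ρ *ᵥ v j else 0 := by
  have h_herm : ∀ i, (![A, F] i).IsHermitian := Fin.forall_fin_two.mpr ⟨hA, hF.isSelfAdjoint⟩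
  have h_pairwise : Pairwise fun i j => Commute (![A, F] i) (![A, F] j) := by
    simp [Pairwise, Fin.forall_fin_two, hcomm, hcomm.symm]
  obtain ⟨v, α, hv, hα⟩ := exists_orthonormal_mulVec_eq_smul_of_pairwise_commute h_herm h_pairwise
  exact ⟨v, α 0, hv, hα 0,
    fun j => mulVec_eq_self_or_eq_zero_of_isIdempotentElem hF.isIdempotentElem (hα 1 j),
    fun ρ hρ j k l =>
      ⟨extendedKirkwoodDirac_self_nonneg hv hρ j k l, extendedKirkwoodDirac_self hv ρ j k l⟩⟩

/-- If the generator `A` commutes with the postselection projector `F`, there is a joint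
orthonormal eigenbasis in which the doubly extended Kirkwood–Dirac quasiprobability
distribution of any positive semidefinite `ρ` is real and nonnegative: the entry with
`j = k = l` equals `⟨v_j, ρ·v_j⟩` and all other entries vanish. -/
theorem kd_nonneg_of_commute
    {n : ℕ} (A F : Matrix (Fin n) (Fin n) ℂ)
    (hA : A.IsHermitian)
    (hFherm : F.IsHermitian) (hFproj : F * F = F)
    (hcomm : A * F = F * A) :
    ∃ (v : Fin n → (Fin n → ℂ)) (α : Fin n → ℝ),
      (∀ j k, star (v j) ⬝ᵥ v k = if j = k then 1 else 0) ∧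
      (∀ j, A.mulVec (v j) = (α j : ℂ) • v j) ∧
      (∀ j, F.mulVec (v j) = v j ∨ F.mulVec (v j) = 0) ∧
      (∀ ρ : Matrix (Fin n) (Fin n) ℂ, ρ.PosSemidef →
        ∀ j k l,
          (((star (v l) ⬝ᵥ v j) * (star (v j) ⬝ᵥ ρ.mulVec (v k))
              * (star (v k) ⬝ᵥ v l)).im = 0 ∧
            0 ≤ ((star (v l) ⬝ᵥ v j) * (star (v j) ⬝ᵥ ρ.mulVec (v k))
              * (star (v k) ⬝ᵥ v l)).re) ∧
          (star (v l) ⬝ᵥ v j) * (star (v j) ⬝ᵥ ρ.mulVec (v k)) * (star (v k) ⬝ᵥ v l)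
            = if j = k ∧ k = l then star (v j) ⬝ᵥ ρ.mulVec (v j) else 0) := by
  obtain ⟨v, α, hv, hAv, hFv, hq⟩ := kd_nonneg_of_commute_general hA ⟨hFproj, hFherm⟩ hcomm
  refine ⟨v, α, hv, hAv, hFv, fun ρ hρ j k l => ⟨?_, (hq ρ hρ j k l).2⟩⟩
  exact (Complex.nonneg_iff.mp (hq ρ hρ j k l).1).symm.imp_left Eq.symm
end
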